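/- Suppose ε_g, ε_H ∈ (0,1), K_H > 0, L_H > 0, γ > 1, ν ∈ (0,1), 0 < σ ≤ 2 γ L_H, and set κ_σ := min{ ν³/(24 γ² L_H²), (1/(2√3)) · min{1/K_H, 1/√(2 γ L_H)} }. If either (i) ‖G‖ > ε_g and -m(η) ≥ (‖G‖/(2√3)) · min{‖G‖/K_H, √(‖G‖/σ)}, or (ii) λ_min(H) < -ε_H and -m(η) ≥ ν³ |λ_min(H)|³ / (6 σ²), then -m(η) ≥ κ_σ · min{ε_g², ε_H³}. (Estimate (19) in the proof of Lemma 3.5.) -/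

import Mathlib

open RealInnerProductSpace

/-!
Both guaranteed decreases are monotone in `‖G‖` or `|λ_min|` and antitone in `σ`, so each is bounded
below by inserting the thresholds `ε_g`, `ε_H` and the largest admissible `σ`. This leaves a
`√ε_g` in the gradient case, which is at least `ε_g` because `ε_g ≤ 1`; that is what makes a uniform
multiple of `ε_g ^ 2` possible. The constant `24 γ² L_H²` is `6 (2 γ L_H)²`.
-/

section GradientThreshold

variable {ε g K σ M : ℝ}

theorem mul_min_one_div_le_min_div_sqrt (hε₀ : 0 ≤ ε) (hε₁ : ε ≤ 1) (hg : ε ≤ g)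
    (hK : 0 < K) (hσ : 0 < σ) (hσM : σ ≤ M) :
    ε * min (1 / K) (1 / √M) ≤ min (g / K) √(g / σ) := by
  have hε_sqrt : ε ≤ √ε := Real.le_sqrt_of_sq_le (pow_le_of_le_one hε₀ hε₁ two_ne_zero)
  rw [mul_min_of_nonneg _ _ hε₀, mul_one_div, mul_one_div]
  have hg₀ : 0 ≤ g := hε₀.trans hg
  refine min_le_min (by gcongr) ?_
  calc ε / √M ≤ √ε / √M := by gcongr
    _ = √(ε / M) := (Real.sqrt_div hε₀ M).symm
    _ ≤ √(g / σ) := by gcongr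

theorem min_one_div_mul_sq_le_mul_min_div_sqrt (hε₀ : 0 ≤ ε) (hε₁ : ε ≤ 1) (hg : ε ≤ g)
    (hK : 0 < K) (hσ : 0 < σ) (hσM : σ ≤ M) :
    min (1 / K) (1 / √M) * ε ^ 2 ≤ g * min (g / K) √(g / σ) :=
  calc min (1 / K) (1 / √M) * ε ^ 2 = ε * (ε * min (1 / K) (1 / √M)) := by ring
    _ ≤ g * min (g / K) √(g / σ) := by
      gcongr
      · exact hε₀.trans hg
      · exact mul_min_one_div_le_min_div_sqrt hε₀ hε₁ hg hK hσ hσM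

end GradientThreshold

section Model

variable {E : Type*} [NormedAddCommGroup E] [InnerProductSpace ℝ E]

/-- The cubic-regularized model `m` with gradient `G`, Hessian `H` and regularization
parameter `σ`. -/
noncomputable def cubicModel (G : E) (H : E →L[ℝ] E) (σ : ℝ) (ξ : E) : ℝ :=
  ⟪G, ξ⟫ + (1 / 2) * ⟪H ξ, ξ⟫ + (σ / 3) * ‖ξ‖ ^ 3

/-- The infimum of the quadratic form of `H` over the unit sphere, which is `λ_min(H)` when `H` is
self-adjoint. It is `0` by convention on the trivial space. -/
noncomputable def rayleighInf (H : E →L[ℝ] E) : ℝ :=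
  sInf ((fun u : E => ⟪u, H u⟫) '' {u : E | ‖u‖ = 1})

theorem model_decrease_uniform_lower_bound_general
    (G : E) (H : E →L[ℝ] E) {σ M K ν ε_g ε_H : ℝ}
    (hεg₀ : 0 ≤ ε_g) (hεg₁ : ε_g ≤ 1) (hεH : 0 ≤ ε_H) (hK : 0 < K) (hν : 0 ≤ ν)
    (hσ : 0 < σ) (hσM : σ ≤ M) (η : E)
    (hcase :
      (ε_g ≤ ‖G‖ ∧ ‖G‖ / (2 * √3) * min (‖G‖ / K) √(‖G‖ / σ) ≤ -cubicModel G H σ η) ∨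
      (rayleighInf H ≤ -ε_H ∧
        ν ^ 3 * |rayleighInf H| ^ 3 / (6 * σ ^ 2) ≤ -cubicModel G H σ η)) :
    min (ν ^ 3 / (6 * M ^ 2)) (1 / (2 * √3) * min (1 / K) (1 / √M)) * min (ε_g ^ 2) (ε_H ^ 3) ≤
      -cubicModel G H σ η := by
  rcases hcase with ⟨hG, hdecrease⟩ | ⟨hl, hdecrease⟩
  · calc
      _ ≤ 1 / (2 * √3) * min (1 / K) (1 / √M) * ε_g ^ 2 := by
        gcongr
        exacts [min_le_right _ _, min_le_left _ _]
      _ = 1 / (2 * √3) * (min (1 / K) (1 / √M) * ε_g ^ 2) := mul_assoc _ _ _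
      _ ≤ 1 / (2 * √3) * (‖G‖ * min (‖G‖ / K) √(‖G‖ / σ)) := by
        gcongr 1 / (2 * √3) * ?_
        exact min_one_div_mul_sq_le_mul_min_div_sqrt hεg₀ hεg₁ hG hK hσ hσM
      _ = ‖G‖ / (2 * √3) * min (‖G‖ / K) √(‖G‖ / σ) := by ring
      _ ≤ -cubicModel G H σ η := hdecrease
  · have hεl : ε_H ≤ |rayleighInf H| := le_abs.mpr (.inr (le_neg_of_le_neg hl))
    calc
      _ ≤ ν ^ 3 / (6 * M ^ 2) * ε_H ^ 3 := by
        gcongr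
        exacts [min_le_left _ _, min_le_right _ _]
      _ = ν ^ 3 * ε_H ^ 3 / (6 * M ^ 2) := by ring
      _ ≤ ν ^ 3 * |rayleighInf H| ^ 3 / (6 * σ ^ 2) := by gcongr
      _ ≤ -cubicModel G H σ η := hdecrease

end Model

/-- Estimate (19) in the proof of Lemma 3.5. -/
theorem model_decrease_uniform_lower_bound
    {E : Type*} [NormedAddCommGroup E] [InnerProductSpace ℝ E] [FiniteDimensional ℝ E]
    (G : E) (H : E →L[ℝ] E) (hH : IsSelfAdjoint H)
    (σ K_H L_H γ ν ε_g ε_H : ℝ)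
    (hεg : ε_g ∈ Set.Ioo (0 : ℝ) 1) (hεH : ε_H ∈ Set.Ioo (0 : ℝ) 1)
    (hK : 0 < K_H) (hL : 0 < L_H) (hγ : 1 < γ) (hν : ν ∈ Set.Ioo (0 : ℝ) 1)
    (hσ : 0 < σ) (hσle : σ ≤ 2 * γ * L_H)
    (hHK : ‖H‖ ≤ K_H)
    (m : E → ℝ)
    (hm : ∀ ξ : E, m ξ = ⟪G, ξ⟫ + (1 / 2) * ⟪H ξ, ξ⟫ + (σ / 3) * ‖ξ‖ ^ 3)
    (lammin : ℝ)
    (hlam : lammin = sInf ((fun u : E => ⟪u, H u⟫) '' {u : E | ‖u‖ = 1}))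
    (κσ : ℝ)
    (hκ : κσ = min (ν ^ 3 / (24 * γ ^ 2 * L_H ^ 2))
        ((1 / (2 * Real.sqrt 3)) * min (1 / K_H) (1 / Real.sqrt (2 * γ * L_H))))
    (η : E)
    (hcase :
      (‖G‖ > ε_g ∧ -m η ≥ (‖G‖ / (2 * Real.sqrt 3)) * min (‖G‖ / K_H) (Real.sqrt (‖G‖ / σ))) ∨
      (lammin < -ε_H ∧ -m η ≥ ν ^ 3 * |lammin| ^ 3 / (6 * σ ^ 2))) :
    -m η ≥ κσ * min (ε_g ^ 2) (ε_H ^ 3) := by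
  obtain rfl : m = cubicModel G H σ := funext hm
  rw [hκ, show 24 * γ ^ 2 * L_H ^ 2 = 6 * (2 * γ * L_H) ^ 2 by ring]
  subst hlam
  exact model_decrease_uniform_lower_bound_general G H hεg.1.le hεg.2.le hεH.1.le hK hν.1.le hσ
    hσle η (hcase.imp (And.imp_left le_of_lt) (And.imp_left le_of_lt))
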